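/- There exist first-order formulas φ_<(x,y), φ_◁(x,y), φ_C(x), φ_Q(x) over the language with a single binary relation symbol for Bit such that for every n ∈ ℕ and all a,b ∈ {0,...,n}: the finite prefix structure ({0,...,n}, Bit) satisfies φ_<(a,b) iff a < b, satisfies φ_◁(a,b) iff a ◁ b, satisfies φ_C(a) iff a ∈ C, and satisfies φ_Q(a) iff a ∈ Q. -/

import Mathlib

open FirstOrder Language

/-- `q_i = i(i+1)/2`, the smallest element of column `i`. -/
def qseq (i : ℕ) : ℕ := i * (i + 1) / 2

/-- `c(x)`, the column number of `x`: the largest `i` with `q_i ≤ x`. -/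
def col (x : ℕ) : ℕ := Nat.findGreatest (fun i => qseq i ≤ x) x

/-- `q(x) = q_{c(x)}`, the bottom-most element of the column of `x`. -/
def qf (x : ℕ) : ℕ := qseq (col x)

/-- `r(x) = x - q(x)`, the row number of `x`. -/
def rowf (x : ℕ) : ℕ := x - qf x

/-- The row-major linear order `◁`. -/
def ordc (x y : ℕ) : Prop := rowf x < rowf y ∨ (rowf x = rowf y ∧ col x < col y)

/-- The unary predicate `C`: bit `r(x)` of `c(x)+1` is 1. -/
def Cpred (x : ℕ) : Prop := Nat.testBit (col x + 1) (rowf x) = true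

/-- The unary predicate `Q`: bit `r(x)` of `q_{c(x)+1}` is 1. -/
def Qpred (x : ℕ) : Prop := Nat.testBit (qseq (col x + 1)) (rowf x) = true

/-- Relation symbols of the language with a single binary relation `Bit`. -/
inductive BitRel : ℕ → Type
  | bit : BitRel 2

/-- The language with a single binary relation symbol for `Bit`. -/
def LBit : Language := ⟨fun _ => Empty, BitRel⟩

/-- The finite prefix structure `({0,...,n}, Bit)`. -/
def bitStruct (n : ℕ) : LBit.Structure (Fin (n + 1)) where
  funMap := fun f _ => f.elim
  RelMap := fun r v =>
    match r with
    | .bit => Nat.testBit (v 0 : ℕ) (v 1 : ℕ) = true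

/-!
The idea is to define ever more arithmetic on `{0, ..., n}` from `Bit`, coding sets of numbers
below `log₂ n` by numbers.

*Order.* The order of the numbers below `log₂ log₂ n` can be guessed, as the set of its initial
segments, and recognised, as the only order that compares numbers as it compares their bit sets
lexicographically. The lexicographic comparison extends an order exponentially, so three of them
lead from there to the order of `{0, ..., n}`.

*Addition* is carry lookahead.

*Multiplication.* The least common multiple of `1, ..., 4 * h` is at least `2 ^ (2 * h)`, so for
numbers below `2 ^ h`, where `h ≈ log₂ n`, it suffices to verify `a * b = p` modulo `1, ..., 4 * h`.
Horner's scheme computes a product modulo `m` in `log₂ n` steps. One number has room for a history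
of `√(log₂ n)` states of `√(log₂ n)` bits each, so the history is guessed in two levels
(Nepomnjaščij): `√(log₂ n)` states, and between any two consecutive ones as many intermediate ones.
This needs `n` to be large; for the finitely many other `n`, the tuples are listed.
-/

/-- The relation symbol `Bit`. -/
def bitSymbol : LBit.Relations 2 := BitRel.bit

/-- `P` is first-order definable over `Bit`, uniformly in the size of the prefix: one formula with
free variables in `α` defines `P n` in `({0, ..., n}, Bit)` for every `n`. The predicate receives
`n` because quantifiers range over `{0, ..., n}`. This is a class so that instance search finds the
defining formula by recursion on the shape of the predicate. -/
class BitDefinable {α : Type} (P : ℕ → (α → ℕ) → Prop) : Prop where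
  exists_formula : ∃ φ : LBit.Formula α, ∀ (n : ℕ) (v : α → Fin (n + 1)),
    letI := bitStruct n
    φ.Realize v ↔ P n fun i => v i

namespace BitDefinable

variable {α β : Type} {P Q : ℕ → (α → ℕ) → Prop}

lemma congr (hP : BitDefinable P) (h : ∀ n v, (∀ i, v i ≤ n) → (P n v ↔ Q n v)) :
    BitDefinable Q := by
  obtain ⟨φ, hφ⟩ := hP.exists_formula
  exact ⟨φ, fun n v => (hφ n v).trans (h n _ fun i => Nat.lt_succ_iff.mp (v i).isLt)⟩

lemma comp (hP : BitDefinable P) (g : α → β) : BitDefinable fun n v => P n fun i => v (g i) := by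
  obtain ⟨φ, hφ⟩ := hP.exists_formula
  refine ⟨φ.relabel g, fun n v => ?_⟩
  let := bitStruct n
  rw [Formula.realize_relabel]
  exact hφ n _

instance and [hP : BitDefinable P] [hQ : BitDefinable Q] :
    BitDefinable fun n v => P n v ∧ Q n v := by
  obtain ⟨φ, hφ⟩ := hP.exists_formula
  obtain ⟨ψ, hψ⟩ := hQ.exists_formula
  refine ⟨φ ⊓ ψ, fun n v => ?_⟩
  let := bitStruct n
  rw [Formula.realize_inf]
  exact and_congr (hφ n v) (hψ n v)

instance not [hP : BitDefinable P] : BitDefinable fun n v => ¬P n v := by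
  obtain ⟨φ, hφ⟩ := hP.exists_formula
  refine ⟨∼φ, fun n v => ?_⟩
  let := bitStruct n
  rw [Formula.realize_not]
  exact not_congr (hφ n v)

instance imp [BitDefinable P] [BitDefinable Q] : BitDefinable fun n v => P n v → Q n v :=
  (inferInstance : BitDefinable fun n v => ¬(P n v ∧ ¬Q n v)).congr fun _ _ _ => by tauto

instance or [BitDefinable P] [BitDefinable Q] : BitDefinable fun n v => P n v ∨ Q n v :=
  (inferInstance : BitDefinable fun n v => ¬P n v → Q n v).congr fun _ _ _ => by tauto

instance iff [BitDefinable P] [BitDefinable Q] : BitDefinable fun n v => (P n v ↔ Q n v) :=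
  (inferInstance : BitDefinable fun n v => (P n v → Q n v) ∧ (Q n v → P n v)).congr
    fun _ _ _ => by tauto

instance exists_le {P : ℕ → (α → ℕ) → ℕ → Prop}
    [hP : BitDefinable fun n (v : Option α → ℕ) => P n (fun i => v (some i)) (v none)] :
    BitDefinable fun n v => ∃ x ≤ n, P n v x := by
  obtain ⟨φ, hφ⟩ := hP.exists_formula
  let g : Option α → α ⊕ Unit := fun o => o.elim (Sum.inr ()) Sum.inl
  refine ⟨(φ.relabel g).iExs Unit, fun n v => ?_⟩
  let := bitStruct n
  have realize_iff (x : Fin (n + 1)) :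
      (φ.relabel g).Realize (Sum.elim v fun _ => x) ↔ P n (fun i => v i) x := by
    rw [Formula.realize_relabel]
    exact hφ n _
  rw [Formula.realize_iExs]
  constructor
  · rintro ⟨x, hx⟩
    exact ⟨x (), Nat.lt_succ_iff.mp (x ()).isLt, (realize_iff _).mp hx⟩
  · rintro ⟨x, hxn, hx⟩
    exact ⟨fun _ => ⟨x, Nat.lt_succ_iff.mpr hxn⟩, (realize_iff _).mpr hx⟩

instance forall_le {P : ℕ → (α → ℕ) → ℕ → Prop}
    [BitDefinable fun n (v : Option α → ℕ) => P n (fun i => v (some i)) (v none)] :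
    BitDefinable fun n v => ∀ x ≤ n, P n v x :=
  (inferInstance : BitDefinable fun n v => ¬∃ x ≤ n, ¬P n v x).congr fun _ _ _ => by
    push Not; rfl

instance testBit (i j : α) : BitDefinable fun _ v => (v i).testBit (v j) := by
  refine ⟨bitSymbol.formula₂ (Term.var i) (Term.var j), fun n v => ?_⟩
  let := bitStruct n
  rw [Formula.realize_rel₂]
  rfl

instance eq (i j : α) : BitDefinable fun _ v => v i = v j := by
  refine ⟨Term.equal (Term.var i) (Term.var j), fun n v => ?_⟩
  let := bitStruct n
  rw [Formula.realize_equal]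
  exact Fin.ext_iff

lemma exists_finite {ι : Type} [Finite ι] {P : ι → ℕ → (α → ℕ) → Prop}
    (hP : ∀ i, BitDefinable (P i)) : BitDefinable fun n v => ∃ i, P i n v := by
  choose φ hφ using fun i => (hP i).exists_formula
  refine ⟨Formula.iSup φ, fun n v => ?_⟩
  let := bitStruct n
  rw [Formula.realize_iSup]
  exact exists_congr fun i => hφ i n v

end BitDefinable

/-! ### Order -/

lemma lt_of_testBit_eq_true {x i : ℕ} (h : x.testBit i) : i < x :=
  i.lt_two_pow_self.trans_le (Nat.ge_two_pow_of_testBit h)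

lemma exists_testBit_iff (p : ℕ → Prop) (K : ℕ) :
    ∃ x < 2 ^ K, ∀ i, x.testBit i ↔ i < K ∧ p i := by
  classical
  refine ⟨Nat.ofBits fun i : Fin K => decide (p i), Nat.ofBits_lt_two_pow _, fun i => ?_⟩
  by_cases hi : i < K
  · simp [hi]
  · simp [hi, Nat.testBit_ofBits_ge _ i (not_lt.mp hi)]

lemma lt_iff_exists_testBit {x y : ℕ} :
    x < y ↔ ∃ k, y.testBit k ∧ ¬x.testBit k ∧ ∀ l, x.testBit l → ¬y.testBit l → l < k := by
  rw [← Finset.orderIsoColex.lt_iff_lt]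
  simp [Finset.Colex.toColex_lt_toColex_iff_exists_forall_lt]

/-- The lexicographic comparison of `x` and `y` as bit sets, when `R` is the order of the bits:
`R` compares the largest bit at which they differ to all others. -/
def BitLex (n : ℕ) (R : ℕ → ℕ → Prop) (x y : ℕ) : Prop :=
  ∃ k ≤ n, y.testBit k ∧ ¬x.testBit k ∧ ∀ l ≤ n, x.testBit l → ¬y.testBit l → R l k

lemma BitLex.mono {n x y : ℕ} {R S : ℕ → ℕ → Prop} (h : BitLex n R x y)
    (hRS : ∀ l ≤ n, ∀ k ≤ n, x.testBit l → y.testBit k → R l k → S l k) : BitLex n S x y := by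
  obtain ⟨k, hkn, hky, hkx, hk⟩ := h
  exact ⟨k, hkn, hky, hkx, fun l hln hlx hly => hRS l hln k hkn hlx hky (hk l hln hlx hly)⟩

lemma bitLex_lt_iff {n x y : ℕ} (hx : x ≤ n) (hy : y ≤ n) : BitLex n (· < ·) x y ↔ x < y := by
  rw [lt_iff_exists_testBit]
  constructor
  · rintro ⟨k, -, hky, hkx, hk⟩
    exact ⟨k, hky, hkx, fun l hlx => hk l ((lt_of_testBit_eq_true hlx).le.trans hx) hlx⟩
  · rintro ⟨k, hky, hkx, hk⟩
    exact ⟨k, (lt_of_testBit_eq_true hky).le.trans hy, hky, hkx, fun l _ => hk l⟩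

/-- `T` codes a set of numbers, each coding a set. If those sets are initial segments of an order,
this is the order. -/
def ChainLT (n T i j : ℕ) : Prop := ∃ s ≤ n, T.testBit s ∧ s.testBit i ∧ ¬s.testBit j

/-- `T` codes an order of the hereditary set `U` which agrees with its own lexicographic lift.
By induction there is only one such order, the usual one. -/
def IsLexOrderOn (n U T : ℕ) : Prop :=
  (∀ i ≤ n, U.testBit i → ∀ l ≤ n, i.testBit l → U.testBit l) ∧
    ∀ i ≤ n, U.testBit i → ∀ j ≤ n, U.testBit j → (ChainLT n T i j ↔ BitLex n (ChainLT n T) i j)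

lemma IsLexOrderOn.chainLT_iff_lt {n U T i j : ℕ} (h : IsLexOrderOn n U T) (hi : i ≤ n)
    (hj : j ≤ n) (hiU : U.testBit i) (hjU : U.testBit j) : ChainLT n T i j ↔ i < j := by
  induction hm : max i j using Nat.strong_induction_on generalizing i j with
  | _ m ih =>
    have bits {l k : ℕ} (hl : l ≤ n) (hk : k ≤ n) (hli : i.testBit l) (hkj : j.testBit k) :
        ChainLT n T l k ↔ l < k := by
      have := lt_of_testBit_eq_true hli
      have := lt_of_testBit_eq_true hkj
      exact ih (max l k) (by omega) hl hk (h.1 i hi hiU l hl hli) (h.1 j hj hjU k hk hkj) rfl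
    rw [h.2 i hi hiU j hj hjU, ← bitLex_lt_iff hi hj]
    exact ⟨fun hij => hij.mono fun l hl k hk hli hkj => (bits hl hk hli hkj).mp,
      fun hij => hij.mono fun l hl k hk hli hkj => (bits hl hk hli hkj).mpr⟩

lemma exists_isLexOrderOn {n m : ℕ} (hm : 2 ^ 2 ^ m ≤ n + 1) :
    ∃ U ≤ n, ∃ T ≤ n, IsLexOrderOn n U T ∧ (∀ i, U.testBit i ↔ i < m) ∧
      ∀ i j, i < m → (ChainLT n T i j ↔ i < j) := by
  have hmn : 2 ^ m ≤ n := by have := (2 ^ m).lt_two_pow_self; omega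
  obtain ⟨T, hT, hTbit⟩ := exists_testBit_iff (fun s => ∃ a ≤ m, s = 2 ^ a - 1) (2 ^ m)
  have chain_iff (i j : ℕ) (hi : i < m) : ChainLT n T i j ↔ i < j := by
    constructor
    · rintro ⟨s, -, hs, hsi, hsj⟩
      obtain ⟨a, -, rfl⟩ := ((hTbit s).mp hs).2
      simp only [Nat.testBit_two_pow_sub_one, decide_eq_true_eq] at hsi hsj
      omega
    · intro hij
      have := Nat.pow_le_pow_right two_pos (show i + 1 ≤ m from hi)
      have := Nat.two_pow_pos (i + 1)
      exact ⟨2 ^ (i + 1) - 1, by omega, (hTbit _).mpr ⟨by omega, i + 1, hi, rfl⟩,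
        by simp, by simp [hij]⟩
  have hU (i : ℕ) : (2 ^ m - 1).testBit i ↔ i < m := by simp
  refine ⟨2 ^ m - 1, by omega, T, by omega, ⟨?_, ?_⟩, hU, chain_iff⟩
  · intro i _ hi l _ hl
    have := lt_of_testBit_eq_true hl
    rw [hU] at hi ⊢
    omega
  · intro i hin hi j hjn hj
    rw [hU] at hi hj
    rw [chain_iff i j hi, ← bitLex_lt_iff hin hjn]
    have bits {l k : ℕ} (hl : i.testBit l) : ChainLT n T l k ↔ l < k :=
      chain_iff l k ((lt_of_testBit_eq_true hl).trans hi)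
    exact ⟨fun h => h.mono fun l _ k _ hl _ => (bits hl).mpr,
      fun h => h.mono fun l _ k _ hl _ => (bits hl).mp⟩

/-- The order of the numbers below `log₂ log₂ n`, by guessing it. -/
def SmallLT (n i j : ℕ) : Prop :=
  ∃ U ≤ n, ∃ T ≤ n, IsLexOrderOn n U T ∧ U.testBit i ∧ U.testBit j ∧ ChainLT n T i j

/-- `R` is a part of the order of `{0, ..., n}` which contains the whole order of
`{0, ..., K - 1}`. -/
structure IsLTBelow (n K : ℕ) (R : ℕ → ℕ → Prop) : Prop where
  lt : ∀ i ≤ n, ∀ j ≤ n, R i j → i < j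
  of_lt : ∀ i j, i < j → j < K → j ≤ n → R i j

lemma isLTBelow_smallLT {n m : ℕ} (hm : 2 ^ 2 ^ m ≤ n + 1) : IsLTBelow n m (SmallLT n) where
  lt i hi j hj := by
    rintro ⟨U, -, T, -, hUT, hiU, hjU, hij⟩
    exact (hUT.chainLT_iff_lt hi hj hiU hjU).mp hij
  of_lt i j hij hj _ := by
    obtain ⟨U, hUn, T, hTn, hUT, hU, hT⟩ := exists_isLexOrderOn hm
    exact ⟨U, hUn, T, hTn, hUT, (hU i).mpr (hij.trans hj), (hU j).mpr hj,
      (hT i j (hij.trans hj)).mpr hij⟩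

lemma IsLTBelow.bitLex {n K : ℕ} {R : ℕ → ℕ → Prop} (hR : IsLTBelow n K R) :
    IsLTBelow n (2 ^ K) (BitLex n R) where
  lt _ hx _ hy h := (bitLex_lt_iff hx hy).mp <| h.mono fun l hl k hk _ _ => hR.lt l hl k hk
  of_lt _ _ hxy hyK hy := ((bitLex_lt_iff (hxy.le.trans hy) hy).mpr hxy).mono
    fun l _ k hkn _ hk hlk => hR.of_lt l k hlk ((Nat.pow_lt_pow_iff_right one_lt_two).mp
      ((Nat.ge_two_pow_of_testBit hk).trans_lt hyK)) hkn

lemma exists_two_pow_two_pow_le {n : ℕ} (hn : 0 < n) :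
    ∃ m, 2 ^ 2 ^ m ≤ n + 1 ∧ n < 2 ^ 2 ^ 2 ^ m := by
  set L := Nat.log 2 (n + 1)
  set m := Nat.log 2 L
  have hL : L ≠ 0 := (Nat.log_pos one_lt_two (by omega)).ne'
  refine ⟨m, (Nat.pow_le_pow_right two_pos (Nat.pow_log_le_self 2 hL)).trans
    (Nat.pow_log_le_self 2 n.succ_ne_zero), ?_⟩
  have hLm : L < 2 ^ 2 ^ m := calc
    L < 2 ^ (m + 1) := Nat.lt_pow_succ_log_self one_lt_two _
    _ ≤ 2 ^ 2 ^ m := Nat.pow_le_pow_right two_pos m.lt_two_pow_self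
  calc
    n < n + 1 := n.lt_succ_self
    _ < 2 ^ (L + 1) := Nat.lt_pow_succ_log_self one_lt_two _
    _ ≤ 2 ^ 2 ^ 2 ^ m := Nat.pow_le_pow_right two_pos hLm

lemma bitLex_bitLex_bitLex_smallLT_iff {n x y : ℕ} (hx : x ≤ n) (hy : y ≤ n) :
    BitLex n (BitLex n (BitLex n (SmallLT n))) x y ↔ x < y := by
  have isLTBelow {m : ℕ} (hm : 2 ^ 2 ^ m ≤ n + 1) :=
    (isLTBelow_smallLT hm).bitLex.bitLex.bitLex
  rcases n.eq_zero_or_pos with rfl | hn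
  · obtain rfl : x = 0 := by omega
    obtain rfl : y = 0 := by omega
    simp [BitLex]
  · obtain ⟨m, hm, hnm⟩ := exists_two_pow_two_pow_le hn
    exact ⟨(isLTBelow hm).lt x hx y hy, fun h => (isLTBelow hm).of_lt x y h (hy.trans_lt hnm) hy⟩

namespace BitDefinable

variable {α : Type}

instance bitLex {R : ℕ → (α → ℕ) → ℕ → ℕ → Prop}
    [hR : BitDefinable fun n (v : α ⊕ Fin 2 → ℕ) =>
      R n (fun a => v (.inl a)) (v (.inr 0)) (v (.inr 1))] (i j : α) :
    BitDefinable fun n v => BitLex n (R n v) (v i) (v j) := by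
  have (l k : Option (Option α)) :
      BitDefinable fun n v => R n (fun a => v (some (some a))) (v l) (v k) :=
    hR.comp (Sum.elim (fun a => some (some a)) ![l, k])
  unfold BitLex
  infer_instance

instance chainLT (t i j : α) : BitDefinable fun n v => ChainLT n (v t) (v i) (v j) := by
  unfold ChainLT
  infer_instance

instance isLexOrderOn (u t : α) : BitDefinable fun n v => IsLexOrderOn n (v u) (v t) := by
  unfold IsLexOrderOn
  infer_instance

instance smallLT (i j : α) : BitDefinable fun n v => SmallLT n (v i) (v j) := by
  unfold SmallLT
  infer_instance

instance lt (i j : α) : BitDefinable fun _ v => v i < v j :=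
  (inferInstance : BitDefinable fun n v =>
    BitLex n (BitLex n (BitLex n (SmallLT n))) (v i) (v j)).congr fun _ _ hv =>
      bitLex_bitLex_bitLex_smallLT_iff (hv i) (hv j)

instance le (i j : α) : BitDefinable fun _ v => v i ≤ v j :=
  (inferInstance : BitDefinable fun _ v => ¬v j < v i).congr fun _ _ _ => not_lt

instance eq_const : ∀ {α : Type} (i : α) (c : ℕ), BitDefinable fun _ v => v i = c
  | _, i, 0 => (inferInstance : BitDefinable fun n v => ∀ y ≤ n, ¬y < v i).congr fun n _ _ =>
      ⟨fun h => by simpa using h 0 n.zero_le, fun h y _ => by omega⟩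
  | α, i, c + 1 => by
    have (y : Option α) : BitDefinable fun _ v => v y = c := eq_const y c
    refine (inferInstance : BitDefinable fun n v =>
      ∃ y ≤ n, y = c ∧ y < v i ∧ ∀ z ≤ n, y < z → ¬z < v i).congr fun n v hv => ?_
    have hvi := hv i
    constructor
    · rintro ⟨_, -, rfl, hci, hz⟩
      exact le_antisymm (not_lt.mp (hz _ (by omega) (by omega))) hci
    · intro h
      exact ⟨c, by omega, rfl, by omega, fun z _ _ => by omega⟩

end BitDefinable

/-! ### Addition -/

/-- Adding `a` and `b` produces a carry into bit `i`. -/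
def HasCarry (a b i : ℕ) : Prop :=
  ∃ j < i, a.testBit j ∧ b.testBit j ∧ ∀ k < i, j < k → a.testBit k ∨ b.testBit k

lemma hasCarry_succ_iff {a b i : ℕ} : HasCarry a b (i + 1) ↔
    a.testBit i ∧ b.testBit i ∨ (a.testBit i ∨ b.testBit i) ∧ HasCarry a b i := by
  constructor
  · rintro ⟨j, hj, haj, hbj, hk⟩
    rcases Nat.lt_succ_iff_lt_or_eq.mp hj with hji | rfl
    · exact .inr ⟨hk i i.lt_succ_self hji, j, hji, haj, hbj, fun k hki => hk k (by omega)⟩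
    · exact .inl ⟨haj, hbj⟩
  · rintro (⟨hai, hbi⟩ | ⟨habi, j, hj, haj, hbj, hk⟩)
    · exact ⟨i, i.lt_succ_self, hai, hbi, fun k _ _ => by omega⟩
    · refine ⟨j, by omega, haj, hbj, fun k hki hjk => ?_⟩
      rcases Nat.lt_succ_iff_lt_or_eq.mp hki with hki | rfl
      · exact hk k hki hjk
      · exact habi

lemma testBit_iff_div_two_pow_mod_two {a i : ℕ} : a.testBit i ↔ a / 2 ^ i % 2 = 1 := by
  simp [Nat.testBit_eq_decide_div_mod_eq]

lemma hasCarry_iff_two_pow_le {a b i : ℕ} : HasCarry a b i ↔ 2 ^ i ≤ a % 2 ^ i + b % 2 ^ i := by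
  induction i with
  | zero => simp [HasCarry, Nat.mod_one]
  | succ i ih =>
    have mod_succ (c : ℕ) : c % 2 ^ (i + 1) = c % 2 ^ i + 2 ^ i * (c / 2 ^ i % 2) := by
      rw [pow_succ, Nat.mod_mul]
    have ha := a.mod_lt (i.two_pow_pos)
    have hb := b.mod_lt (i.two_pow_pos)
    rw [hasCarry_succ_iff, ih, testBit_iff_div_two_pow_mod_two, testBit_iff_div_two_pow_mod_two,
      mod_succ, mod_succ, pow_succ]
    rcases Nat.mod_two_eq_zero_or_one (a / 2 ^ i) with hai | hai <;>
    rcases Nat.mod_two_eq_zero_or_one (b / 2 ^ i) with hbi | hbi <;>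
    · rw [hai, hbi]
      omega

lemma testBit_add_iff {a b i : ℕ} :
    (a + b).testBit i ↔ ((a.testBit i ↔ b.testBit i) ↔ HasCarry a b i) := by
  simp only [hasCarry_iff_two_pow_le, testBit_iff_div_two_pow_mod_two, Nat.add_div i.two_pow_pos]
  split_ifs with hcarry <;> simp only [hcarry, iff_true, iff_false] <;> omega

lemma lt_two_pow_iff_testBit {x h : ℕ} : x < 2 ^ h ↔ ∀ i, x.testBit i → i < h := by
  constructor
  · intro hx i hi
    exact (Nat.pow_lt_pow_iff_right one_lt_two).mp ((Nat.ge_two_pow_of_testBit hi).trans_lt hx)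
  · intro hx
    refine Nat.lt_pow_two_of_testBit x fun i hi => ?_
    by_contra hxi
    exact (hx i (by simpa using hxi)).not_ge hi

/-- The number written in bits `u, ..., u + w - 1` of `x`. -/
def digit (x w u : ℕ) : ℕ := x / 2 ^ u % 2 ^ w

lemma testBit_digit_iff {x w u i : ℕ} : (digit x w u).testBit i ↔ i < w ∧ x.testBit (u + i) := by
  simp [digit, Nat.testBit_mod_two_pow, Nat.testBit_div_two_pow, add_comm]

lemma digit_le {x w u : ℕ} : digit x w u ≤ x := (Nat.mod_le _ _).trans (Nat.div_le_self _ _)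

lemma forall_le_testBit_iff_eq {n x y : ℕ} (hx : x < 2 ^ (n + 1)) (hy : y < 2 ^ (n + 1)) :
    (∀ i ≤ n, x.testBit i ↔ y.testBit i) ↔ x = y := by
  refine ⟨fun h => Nat.eq_of_testBit_eq fun i => Bool.eq_iff_iff.mpr ?_, by rintro rfl; simp⟩
  rcases le_or_gt i n with hi | hi
  · exact h i hi
  · have hpow : 2 ^ (n + 1) ≤ 2 ^ i := Nat.pow_le_pow_right two_pos hi
    rw [Nat.testBit_lt_two_pow (hx.trans_le hpow), Nat.testBit_lt_two_pow (hy.trans_le hpow)]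

namespace BitDefinable

variable {α : Type}

instance testBit_add (i j k : α) : BitDefinable fun _ v => (v i + v j).testBit (v k) := by
  have : BitDefinable fun _ v => HasCarry (v i) (v j) (v k) :=
    (inferInstance : BitDefinable fun n v => ∃ l ≤ n, l < v k ∧ (v i).testBit l ∧
      (v j).testBit l ∧ ∀ m ≤ n, m < v k → l < m → (v i).testBit m ∨ (v j).testBit m).congr
    fun n v hv => by
      have hk := hv k
      exact ⟨fun ⟨l, _, hl, hil, hjl, hm⟩ => ⟨l, hl, hil, hjl, fun m hm' => hm m (by omega) hm'⟩,
        fun ⟨l, hl, hil, hjl, hm⟩ => ⟨l, by omega, hl, hil, hjl, fun m _ => hm m⟩⟩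
  exact (inferInstance : BitDefinable fun _ v => (((v i).testBit (v k) ↔ (v j).testBit (v k)) ↔
    HasCarry (v i) (v j) (v k))).congr fun _ _ _ => testBit_add_iff.symm

instance add (i j k : α) : BitDefinable fun _ v => v i + v j = v k := by
  refine (inferInstance : BitDefinable fun n v =>
    ∀ l ≤ n, (v i + v j).testBit l ↔ (v k).testBit l).congr fun n v hv => ?_
  have := n.lt_two_pow_self
  have := hv i
  have := hv j
  have := hv k
  exact forall_le_testBit_iff_eq (by omega) (by omega)

instance succ (i j : α) : BitDefinable fun _ v => v i + 1 = v j := by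
  refine (inferInstance : BitDefinable fun n v =>
    ∃ o ≤ n, o = 1 ∧ v i + o = v j).congr fun n v hv => ?_
  have hvj := hv j
  constructor
  · rintro ⟨_, -, rfl, h⟩
    exact h
  · exact fun h => ⟨1, by omega, rfl, h⟩

instance testBit_at_add (x u i : α) : BitDefinable fun _ v => (v x).testBit (v u + v i) := by
  refine (inferInstance : BitDefinable fun n v =>
    ∃ k ≤ n, v u + v i = k ∧ (v x).testBit k).congr fun n v hv => ?_
  constructor
  · rintro ⟨_, -, rfl, h⟩
    exact h
  · exact fun h => ⟨_, (lt_of_testBit_eq_true h).le.trans (hv x), rfl, h⟩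

instance lt_two_pow (x h : α) : BitDefinable fun _ v => v x < 2 ^ v h := by
  refine (inferInstance : BitDefinable fun n v =>
    ∀ i ≤ n, (v x).testBit i → i < v h).congr fun n v hv => ?_
  rw [lt_two_pow_iff_testBit]
  exact ⟨fun H i hi => H i ((lt_of_testBit_eq_true hi).le.trans (hv x)) hi, fun H i _ => H i⟩

instance digit_eq (x w u d : α) : BitDefinable fun _ v => digit (v x) (v w) (v u) = v d := by
  refine (inferInstance : BitDefinable fun n v =>
    ∀ i ≤ n, (i < v w ∧ (v x).testBit (v u + i)) ↔ (v d).testBit i).congr fun n v hv => ?_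
  have := n.lt_two_pow_self
  have hd := hv d
  have hx : digit (v x) (v w) (v u) ≤ n := digit_le.trans (hv x)
  simp_rw [← testBit_digit_iff]
  exact forall_le_testBit_iff_eq (by omega) (by omega)

end BitDefinable

/-! ### Iteration -/

lemma exists_digit_eq {f : ℕ → ℕ} {w l : ℕ} (hf : ∀ t < l, f t < 2 ^ w) :
    ∃ x < 2 ^ (l * w), ∀ t < l, digit x w (t * w) = f t := by
  obtain ⟨x, hx, hbit⟩ := exists_testBit_iff (fun i => (f (i / w)).testBit (i % w)) (l * w)
  refine ⟨x, hx, fun t ht => Nat.eq_of_testBit_eq fun i => Bool.eq_iff_iff.mpr ?_⟩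
  rw [testBit_digit_iff, hbit]
  constructor
  · rintro ⟨hi, -, h⟩
    rwa [Nat.mul_add_mod_of_lt hi, mul_comm, Nat.mul_add_div (by omega), Nat.div_eq_of_lt hi]
      at h
  · intro h
    have hi : i < w := lt_two_pow_iff_testBit.mp (hf t ht) i h
    have : (t + 1) * w ≤ l * w := Nat.mul_le_mul_right w ht
    refine ⟨hi, by linarith, ?_⟩
    rwa [Nat.mul_add_mod_of_lt hi, mul_comm, Nat.mul_add_div (by omega), Nat.div_eq_of_lt hi]

/-- The pair of numbers written at position `u` of `I` and `T`, in digits of `w` bits. -/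
def state (w I T u : ℕ) : ℕ × ℕ := (digit I w u, digit T w u)

/-- `t` is reached from `s` by steps of `S`, along a path written down in `I` and `T` at the
positions belonging to `M`. -/
def Chain (n : ℕ) (S : ℕ × ℕ → ℕ × ℕ → Prop) (s t : ℕ × ℕ) : Prop :=
  ∃ w ≤ n, ∃ I ≤ n, ∃ T ≤ n, ∃ M ≤ n, (∃ u ≤ n, M.testBit u ∧ state w I T u = s) ∧
    ∀ u ≤ n, M.testBit u → state w I T u = t ∨
      ∃ u' ≤ n, u < u' ∧ M.testBit u' ∧ S (state w I T u) (state w I T u')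

lemma Chain.reflTransGen {n : ℕ} {S : ℕ × ℕ → ℕ × ℕ → Prop} {s t : ℕ × ℕ} (h : Chain n S s t) :
    Relation.ReflTransGen S s t := by
  obtain ⟨w, -, I, -, T, -, M, -, ⟨u, hu, huM, rfl⟩, hstep⟩ := h
  induction hk : n - u using Nat.strong_induction_on generalizing u with
  | _ k ih =>
    rcases hstep u hu huM with hut | ⟨u', hu', huu', huM', hS⟩
    · rw [hut]
    · exact .head hS (ih (n - u') (by omega) u' hu' huM' rfl)

lemma chain_of_forall_lt {n l w : ℕ} {S : ℕ × ℕ → ℕ × ℕ → Prop} {f : ℕ → ℕ × ℕ}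
    (hS : ∀ t < l, S (f t) (f (t + 1))) (hw : 0 < w)
    (hf : ∀ t ≤ l, (f t).1 < 2 ^ w ∧ (f t).2 < 2 ^ w) (hn : 2 ^ ((l + 1) * w) ≤ n) :
    Chain n S (f 0) (f l) := by
  obtain ⟨I, hI, hIf⟩ := exists_digit_eq (l := l + 1) fun t ht => (hf t (by omega)).1
  obtain ⟨T, hT, hTf⟩ := exists_digit_eq (l := l + 1) fun t ht => (hf t (by omega)).2
  obtain ⟨M, hM, hMbit⟩ := exists_testBit_iff (fun u => ∃ t ≤ l, u = t * w) ((l + 1) * w)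
  have state_eq {t : ℕ} (ht : t ≤ l) : state w I T (t * w) = f t :=
    Prod.ext (hIf t (by omega)) (hTf t (by omega))
  have mem_M {t : ℕ} (ht : t ≤ l) : M.testBit (t * w) :=
    (hMbit _).mpr ⟨Nat.mul_lt_mul_of_pos_right (by omega) hw, t, ht, rfl⟩
  have le_n {u : ℕ} (hu : M.testBit u) : u ≤ n := by
    have := lt_of_testBit_eq_true hu
    omega
  have hwn : w ≤ n := by
    have := ((l + 1) * w).lt_two_pow_self
    have : 1 * w ≤ (l + 1) * w := Nat.mul_le_mul_right w (by omega)
    omega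
  refine ⟨w, hwn, I, by omega, T, by omega, M, by omega,
    ⟨0 * w, le_n (mem_M l.zero_le), mem_M l.zero_le, state_eq l.zero_le⟩, fun u _ hu => ?_⟩
  obtain ⟨-, t, ht, rfl⟩ := (hMbit u).mp hu
  rcases ht.eq_or_lt with rfl | htl
  · exact .inl (state_eq ht)
  · refine .inr ⟨(t + 1) * w, le_n (mem_M htl), Nat.mul_lt_mul_of_pos_right (by omega) hw,
      mem_M htl, ?_⟩
    rw [state_eq ht, state_eq htl]
    exact hS t htl

lemma chain_chain_of_forall_lt {n B w : ℕ} {S : ℕ × ℕ → ℕ × ℕ → Prop} {f : ℕ → ℕ × ℕ}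
    (hS : ∀ t < B * B, S (f t) (f (t + 1))) (hw : 0 < w)
    (hf : ∀ t ≤ B * B, (f t).1 < 2 ^ w ∧ (f t).2 < 2 ^ w) (hn : 2 ^ ((B + 1) * w) ≤ n) :
    Chain n (Chain n S) (f 0) (f (B * B)) := by
  have outer : Chain n (Chain n S) (f (0 * B)) (f (B * B)) := by
    refine chain_of_forall_lt (f := fun t => f (t * B)) (fun t ht => ?_) hw
      (fun t ht => hf _ (Nat.mul_le_mul_right B ht)) hn
    have block : (t + 1) * B ≤ B * B := Nat.mul_le_mul_right B ht
    rw [add_one_mul] at block ⊢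
    exact chain_of_forall_lt (f := fun j => f (t * B + j)) (fun j _ => hS _ (by omega)) hw
      (fun j _ => hf _ (by omega)) hn
  rwa [zero_mul] at outer

namespace BitDefinable

variable {α : Type}

instance state_eq (w I T u i j : α) :
    BitDefinable fun _ v => state (v w) (v I) (v T) (v u) = (v i, v j) := by
  simp only [state, Prod.mk.injEq]
  infer_instance

instance chain {S : ℕ → (α → ℕ) → ℕ × ℕ → ℕ × ℕ → Prop}
    [hS : BitDefinable fun n (v : α ⊕ Fin 4 → ℕ) =>
      S n (fun a => v (.inl a)) (v (.inr 0), v (.inr 1)) (v (.inr 2), v (.inr 3))] (i j k l : α) :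
    BitDefinable fun n v => Chain n (S n v) (v i, v j) (v k, v l) := by
  have step {β : Type} (g : α → β) (w I T u u' : β) : BitDefinable fun n v =>
      S n (fun a => v (g a)) (state (v w) (v I) (v T) (v u)) (state (v w) (v I) (v T) (v u')) := by
    have : BitDefinable fun n (v : Option (Option (Option (Option β))) → ℕ) =>
        S n (fun a => v (some (some (some (some (g a))))))
          (v (some (some (some none))), v (some (some none))) (v (some none), v none) :=
      hS.comp (Sum.elim (fun a => some (some (some (some (g a)))))
        ![some (some (some none)), some (some none), some none, none])
    refine (inferInstance : BitDefinable fun n v => ∃ a ≤ n, ∃ b ≤ n, ∃ c ≤ n, ∃ d ≤ n,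
      state (v w) (v I) (v T) (v u) = (a, b) ∧ state (v w) (v I) (v T) (v u') = (c, d) ∧
        S n (fun a => v (g a)) (a, b) (c, d)).congr fun n v hv => ?_
    constructor
    · rintro ⟨a, -, b, -, c, -, d, -, h, h', hS⟩
      rwa [h, h']
    · exact fun h => ⟨_, digit_le.trans (hv I), _, digit_le.trans (hv T),
        _, digit_le.trans (hv I), _, digit_le.trans (hv T), rfl, rfl, h⟩
  have := step fun a : α => some (some (some (some (some (some a)))))
  unfold Chain
  infer_instance

end BitDefinable

/-! ### Multiplication -/

/-- A step of Horner's scheme for `a * c` modulo `m` along the bits of `a`: from `(i + 1, x)` to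
`(i, y)`, where `y` is obtained from `2 * x + c` or `2 * x` by at most two subtractions of `m`. -/
def HornerStep (n a c m : ℕ) (s t : ℕ × ℕ) : Prop :=
  t.1 + 1 = s.1 ∧ ∃ d ≤ n, s.2 + s.2 = d ∧ ∃ z ≤ n,
    (a.testBit t.1 ∧ d + c = z ∨ ¬a.testBit t.1 ∧ d = z) ∧
    (t.2 = z ∨ t.2 + m = z ∨ ∃ y ≤ n, t.2 + m = y ∧ y + m = z)

lemma div_two_pow_eq_bit (a i : ℕ) :
    a / 2 ^ i = 2 * (a / 2 ^ (i + 1)) + (a.testBit i).toNat := by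
  rw [pow_succ, ← Nat.div_div_eq_div_mul, Nat.toNat_testBit, Nat.div_add_mod]

lemma HornerStep.modEq {n a c m : ℕ} {s t : ℕ × ℕ} (h : HornerStep n a c m s t)
    (hs : s.2 ≡ a / 2 ^ s.1 * c [MOD m]) : t.2 ≡ a / 2 ^ t.1 * c [MOD m] := by
  obtain ⟨hi, d, -, hd, z, -, hz, hred⟩ := h
  have hzt : t.2 ≡ z [MOD m] := by
    rcases hred with rfl | rfl | ⟨y, -, rfl, rfl⟩
    · rfl
    · simp [Nat.ModEq]
    · simp [Nat.ModEq]
  have hz : z = 2 * s.2 + (a.testBit t.1).toNat * c := by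
    rcases hz with ⟨hbit, hz⟩ | ⟨hbit, hz⟩ <;> simp [hbit] <;> omega
  calc
    t.2 ≡ 2 * s.2 + (a.testBit t.1).toNat * c [MOD m] := hz ▸ hzt
    _ ≡ 2 * (a / 2 ^ s.1 * c) + (a.testBit t.1).toNat * c [MOD m] := (hs.mul_left 2).add_right _
    _ = a / 2 ^ t.1 * c := by rw [div_two_pow_eq_bit a t.1, hi]; ring

lemma hornerStep_mod {n a c m i : ℕ} (hm : 0 < m) (hc : c ≤ m) (hn : 3 * m ≤ n) :
    HornerStep n a c m (i + 1, a / 2 ^ (i + 1) * c % m) (i, a / 2 ^ i * c % m) := by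
  set x := a / 2 ^ (i + 1) * c % m
  set y := a / 2 ^ i * c % m
  set b := (a.testBit i).toNat
  have hb : a.testBit i ∧ b * c = c ∨ ¬a.testBit i ∧ b * c = 0 := by
    cases h : a.testBit i <;> simp [b, h]
  have hx : x < m := Nat.mod_lt _ hm
  have hy : y = (2 * x + b * c) % m := by
    simp only [y, div_two_pow_eq_bit a i, add_mul, mul_assoc]
    exact ((Nat.mod_modEq _ m).symm.mul_left 2).add_right _
  have hq : (2 * x + b * c) / m < 3 := by
    rw [Nat.div_lt_iff_lt_mul hm]
    omega
  have hdiv := Nat.mod_add_div (2 * x + b * c) m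
  rw [← hy] at hdiv
  refine ⟨rfl, x + x, by omega, rfl, 2 * x + b * c, by omega,
    hb.imp (.imp_right fun h => by omega) (.imp_right fun h => by omega), ?_⟩
  change y = _ ∨ y + m = _ ∨ ∃ z ≤ n, y + m = z ∧ z + m = _
  interval_cases (2 * x + b * c) / m
  · exact .inl (by omega)
  · exact .inr (.inl (by omega))
  · exact .inr (.inr ⟨y + m, by omega, rfl, by omega⟩)

/-- `r` is the product of `a` and `c` modulo `m`, computed by Horner's scheme. Guessing all of its
steps at once takes too many bits, so only some are guessed, and then those between them. -/
def MulMod (n m a c r : ℕ) : Prop :=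
  ∃ i ≤ n, ∃ z ≤ n, z = 0 ∧ a < 2 ^ i ∧ Chain n (Chain n (HornerStep n a c m)) (i, z) (z, r)

lemma MulMod.modEq {n m a c r : ℕ} (h : MulMod n m a c r) : r ≡ a * c [MOD m] := by
  obtain ⟨i, -, z, -, rfl, hai, hchain⟩ := h
  have hsteps : Relation.ReflTransGen (HornerStep n a c m) (i, 0) (0, r) :=
    Relation.reflTransGen_closed (fun _ _ => Chain.reflTransGen) _ _ hchain.reflTransGen
  have invariant : ∀ s, Relation.ReflTransGen (HornerStep n a c m) (i, 0) s →
      s.2 ≡ a / 2 ^ s.1 * c [MOD m] := by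
    intro s hs
    induction hs with
    | refl => simp [Nat.div_eq_of_lt hai, Nat.ModEq]
    | tail _ hstep ih => exact hstep.modEq ih
  simpa using invariant _ hsteps

lemma mulMod_mod {n m a c B w : ℕ} (hm : 0 < m) (hmw : m ≤ 2 ^ w) (hmn : 3 * m ≤ n) (hc : c ≤ m)
    (ha : a < 2 ^ (B * B)) (hw : 0 < w) (hB : B * B < 2 ^ w) (hn : 2 ^ ((B + 1) * w) ≤ n) :
    MulMod n m a c (a * c % m) := by
  let f (t : ℕ) : ℕ × ℕ := (B * B - t, a / 2 ^ (B * B - t) * c % m)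
  have hstep (t : ℕ) (ht : t < B * B) : HornerStep n a c m (f t) (f (t + 1)) := by
    have hsub : B * B - t = B * B - (t + 1) + 1 := by omega
    simp only [f, hsub]
    exact hornerStep_mod hm hc hmn
  have hlt (t : ℕ) (_ : t ≤ B * B) : (f t).1 < 2 ^ w ∧ (f t).2 < 2 ^ w :=
    ⟨(Nat.sub_le _ _).trans_lt hB, (Nat.mod_lt _ hm).trans_le hmw⟩
  have hwn : 2 ^ w ≤ n :=
    (Nat.pow_le_pow_right two_pos (Nat.le_mul_of_pos_left w B.succ_pos)).trans hn
  have hchain := chain_chain_of_forall_lt hstep hw hlt hn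
  simp only [f, Nat.sub_zero, Nat.sub_self, pow_zero, Nat.div_one, Nat.div_eq_of_lt ha, zero_mul,
    Nat.zero_mod] at hchain
  exact ⟨B * B, by omega, 0, n.zero_le, rfl, ha, hchain⟩

lemma two_pow_le_lcmUpto_two_mul (h : ℕ) : 2 ^ h ≤ Nat.lcmUpto (2 * h) := by
  have linear_le (k : ℕ) : 2 * (k + 3) + 1 ≤ 2 ^ (k + 3) := by
    induction k with
    | zero => norm_num
    | succ k ih => rw [show k + 1 + 3 = k + 3 + 1 by ring, pow_succ]; omega
  match h with
  | 0 | 1 | 2 => decide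
  | k + 3 =>
    refine Nat.le_of_mul_le_mul_left ?_ (k + 3).two_pow_pos
    calc
      2 ^ (k + 3) * 2 ^ (k + 3) = 2 ^ (2 * (k + 3)) := by rw [← pow_add, two_mul]
      _ ≤ (2 * (k + 3) + 1) * Nat.lcmUpto (2 * (k + 3)) :=
        Chebyshev.two_pow_le_mul_lcmUpto _
      _ ≤ 2 ^ (k + 3) * Nat.lcmUpto (2 * (k + 3)) :=
        Nat.mul_le_mul_right _ (linear_le k)

lemma modEq_lcmUpto {k a b : ℕ} (h : ∀ m, 0 < m → m ≤ k → a ≡ b [MOD m]) :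
    a ≡ b [MOD Nat.lcmUpto k] := by
  rw [Nat.modEq_iff_dvd, ← Int.dvd_natAbs, Int.natCast_dvd_natCast]
  refine Finset.lcm_dvd fun m hm => ?_
  obtain ⟨hm, hmk⟩ := Finset.mem_Icc.mp hm
  rw [id, ← Int.natCast_dvd_natCast, Int.dvd_natAbs]
  exact (h m hm hmk).dvd

/-- `p` is the product of `a` and `b`, verified modulo all small moduli. -/
def IsProduct (n a b p : ℕ) : Prop :=
  ∃ h ≤ n, a < 2 ^ h ∧ b < 2 ^ h ∧ p < 2 ^ h ∧ ∃ h₂ ≤ n, h + h = h₂ ∧ ∃ h₄ ≤ n, h₂ + h₂ = h₄ ∧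
    ∀ m ≤ n, ¬m = 0 → m ≤ h₄ → ∃ e ≤ n, e = 1 ∧ ∃ c ≤ n, ∃ r ≤ n,
      MulMod n m b e c ∧ MulMod n m a c r ∧ MulMod n m p e r

lemma IsProduct.eq {n a b p : ℕ} (hprod : IsProduct n a b p) : a * b = p := by
  obtain ⟨h, -, ha, hb, hp, _, -, rfl, _, h₄n, rfl, hmod⟩ := hprod
  have two_pow_le : 2 ^ (h + h) ≤ Nat.lcmUpto (h + h + (h + h)) := by
    simpa [two_mul] using two_pow_le_lcmUpto_two_mul (h + h)
  have hab : a * b < 2 ^ (h + h) := pow_add 2 h h ▸ Nat.mul_lt_mul'' ha hb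
  have hp : p < 2 ^ (h + h) := hp.trans_le (Nat.pow_le_pow_right two_pos (by omega))
  refine Nat.ModEq.eq_of_lt_of_lt (modEq_lcmUpto fun m hm hmh => ?_)
    (hab.trans_le two_pow_le) (hp.trans_le two_pow_le)
  obtain ⟨_, -, rfl, c, -, r, -, hbc, hacr, hpr⟩ := hmod m (hmh.trans h₄n) hm.ne' hmh
  calc
    a * b ≡ a * c [MOD m] := by simpa using hbc.modEq.symm.mul_left a
    _ ≡ r [MOD m] := hacr.modEq.symm
    _ ≡ p [MOD m] := by simpa using hpr.modEq

lemma isProduct_mul {n a b B w : ℕ} (hw : 0 < w) (hBw : 4 * (B * B) < 2 ^ w)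
    (hBn : 12 * (B * B) ≤ n) (hn : 2 ^ ((B + 1) * w) ≤ n) (hnB : n < 2 ^ (B * B))
    (ha : a ≤ n) (hb : b ≤ n) (hab : a * b ≤ n) : IsProduct n a b (a * b) := by
  have n_pos : 0 < n := (Nat.two_pow_pos _).trans_le hn
  refine ⟨B * B, by omega, ha.trans_lt hnB, hb.trans_lt hnB, hab.trans_lt hnB, _, by omega, rfl,
    _, by omega, rfl, fun m hmn hm0 hmB => ?_⟩
  have hm : 0 < m := Nat.pos_of_ne_zero hm0
  have mulMod {x c : ℕ} (hx : x ≤ n) (hc : c ≤ m) : MulMod n m x c (x * c % m) :=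
    mulMod_mod hm (by omega) (by omega) hc (hx.trans_lt hnB) hw (by omega) hn
  have mod_le (x : ℕ) : x % m ≤ n := (Nat.mod_lt x hm).le.trans hmn
  refine ⟨1, n_pos, rfl, b % m, mod_le _, a * b % m, mod_le _, ?_, ?_, ?_⟩
  · simpa using mulMod hb (c := 1) hm
  · simpa using mulMod ha (Nat.mod_lt b hm).le
  · simpa using mulMod hab (c := 1) hm

lemma four_mul_sq_lt_two_pow {w : ℕ} (hw : 10 ≤ w) : 4 * ((w + 3) * (w + 3)) < 2 ^ w := by
  induction w, hw using Nat.le_induction with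
  | base => norm_num
  | succ w hw ih => rw [pow_succ]; nlinarith

lemma exists_two_pow_sq_le {n k : ℕ} (hn : 2 ^ (k * k) ≤ n) :
    ∃ w ≥ k, 2 ^ (w * w) ≤ n ∧ n < 2 ^ ((w + 1) * (w + 1)) := by
  have n_ne_zero : n ≠ 0 := ((Nat.two_pow_pos _).trans_le hn).ne'
  exact ⟨(Nat.log 2 n).sqrt, Nat.le_sqrt.mpr (Nat.le_log_of_pow_le one_lt_two hn),
    (Nat.pow_le_pow_right two_pos (Nat.sqrt_le _)).trans (Nat.pow_log_le_self 2 n_ne_zero),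
    Nat.lt_pow_of_log_lt one_lt_two (Nat.lt_succ_sqrt _)⟩

lemma eventually_isProduct_iff : ∀ᶠ n in Filter.atTop, ∀ a ≤ n, ∀ b ≤ n, ∀ p ≤ n,
    IsProduct n a b p ↔ a * b = p := by
  filter_upwards [Filter.eventually_ge_atTop (2 ^ (12 * 12))] with n hn a ha b hb p hp
  refine ⟨IsProduct.eq, fun hab => ?_⟩
  obtain ⟨w, hw, hwn, hnw⟩ := exists_two_pow_sq_le hn
  obtain ⟨w, rfl⟩ := Nat.exists_eq_add_of_le' (le_trans (by norm_num : 2 ≤ 12) hw)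
  have hBw := four_mul_sq_lt_two_pow (w := w) (by omega)
  have hBn : 2 ^ ((w + 3 + 1) * w) ≤ n :=
    (Nat.pow_le_pow_right two_pos (by linarith)).trans hwn
  have h4w : 2 ^ (w + 2) ≤ n := (Nat.pow_le_pow_right two_pos (by nlinarith)).trans hwn
  rw [pow_add] at h4w
  exact hab ▸ isProduct_mul (by omega) hBw (by omega) hBn hnw ha hb (hab ▸ hp)

namespace BitDefinable

variable {α : Type}

lemma of_eventually [Finite α] {P Q : ℕ → (α → ℕ) → Prop} (hP : BitDefinable P)
    (h : ∀ᶠ n in Filter.atTop, ∀ v, (∀ i, v i ≤ n) → (P n v ↔ Q n v)) : BitDefinable Q := by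
  obtain ⟨N, hN⟩ := Filter.eventually_atTop.mp h
  -- `∃ x ≤ n, x = N` is a definable way of saying `N ≤ n`.
  let Exception := {e : Fin N × (α → Fin N) // Q e.1 fun i => e.2 i}
  have isException (e : Exception) : BitDefinable fun n v =>
      ((∃ x ≤ n, x = (e.1.1 : ℕ)) ∧ ¬∃ x ≤ n, x = (e.1.1 : ℕ) + 1) ∧
        ¬∃ i, ¬v i = (e.1.2 i : ℕ) := by
    have := exists_finite (α := α) (P := fun i _ v => ¬v i = (e.1.2 i : ℕ)) inferInstance
    infer_instance
  have := exists_finite isException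
  refine (inferInstance : BitDefinable fun n v => (∃ x ≤ n, x = N) ∧ P n v ∨ ∃ e : Exception,
    ((∃ x ≤ n, x = (e.1.1 : ℕ)) ∧ ¬∃ x ≤ n, x = (e.1.1 : ℕ) + 1) ∧
      ¬∃ i, ¬v i = (e.1.2 i : ℕ)).congr fun n v hv => ?_
  simp only [exists_eq_right, not_exists, not_not]
  constructor
  · rintro (⟨hNn, hPv⟩ | ⟨e, hen, hev⟩)
    · exact (hN n hNn v hv).mp hPv
    · obtain rfl : n = e.1.1 := by omega
      rw [funext hev]
      exact e.2
  · intro hQ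
    rcases le_or_gt N n with hNn | hnN
    · exact .inl ⟨hNn, (hN n hNn v hv).mpr hQ⟩
    · exact .inr ⟨⟨(⟨n, hnN⟩, fun i => ⟨v i, (hv i).trans_lt hnN⟩), hQ⟩,
        ⟨le_rfl, n.not_succ_le_self⟩, fun _ => rfl⟩

instance hornerStep (a c m i x j y : α) :
    BitDefinable fun n v => HornerStep n (v a) (v c) (v m) (v i, v x) (v j, v y) := by
  unfold HornerStep
  infer_instance

instance mulMod (m a c r : α) : BitDefinable fun n v => MulMod n (v m) (v a) (v c) (v r) := by
  unfold MulMod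
  infer_instance

instance isProduct (a b p : α) : BitDefinable fun n v => IsProduct n (v a) (v b) (v p) := by
  unfold IsProduct
  infer_instance

instance mul (i j k : α) : BitDefinable fun _ v => v i * v j = v k := by
  have : BitDefinable fun _ (v : Fin 3 → ℕ) => v 0 * v 1 = v 2 :=
    (inferInstance : BitDefinable fun n (v : Fin 3 → ℕ) =>
      IsProduct n (v 0) (v 1) (v 2)).of_eventually <| eventually_isProduct_iff.mono
        fun n hn v hv => hn _ (hv 0) _ (hv 1) _ (hv 2)
  exact this.comp ![i, j, k]

end BitDefinable

/-! ### Columns -/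

lemma qseq_succ (c : ℕ) : qseq (c + 1) = qseq c + (c + 1) := by
  rw [qseq, qseq, show (c + 1) * (c + 1 + 1) = c * (c + 1) + (c + 1) * 2 by ring,
    Nat.add_mul_div_right _ _ two_pos]

lemma qseq_mono : Monotone qseq := monotone_nat_of_le_succ fun c => by rw [qseq_succ]; omega

lemma le_qseq (c : ℕ) : c ≤ qseq c := by
  cases c with
  | zero => exact Nat.zero_le _
  | succ c => rw [qseq_succ]; omega

lemma qseq_two_mul (d : ℕ) : qseq (2 * d) = 2 * d * d + d := by
  rw [qseq, mul_assoc, Nat.mul_div_cancel_left _ two_pos]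
  ring

lemma qseq_two_mul_add_one (d : ℕ) : qseq (2 * d + 1) = (2 * d + 1) * d + (2 * d + 1) := by
  rw [qseq_succ, qseq_two_mul]
  ring

lemma qseq_eq_iff {c q : ℕ} : qseq c = q ↔
    ∃ d, d + d = c ∧ c * d + d = q ∨ d + d + 1 = c ∧ c * d + c = q := by
  constructor
  · rintro rfl
    rcases c.even_or_odd' with ⟨d, rfl | rfl⟩
    · exact ⟨d, .inl ⟨(two_mul d).symm, (qseq_two_mul d).symm⟩⟩
    · exact ⟨d, .inr ⟨by omega, (qseq_two_mul_add_one d).symm⟩⟩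
  · rintro ⟨d, ⟨rfl, rfl⟩ | ⟨rfl, rfl⟩⟩
    · rw [← two_mul, qseq_two_mul]
    · rw [← two_mul, qseq_two_mul_add_one]

lemma col_eq_iff {x c : ℕ} : col x = c ↔ qseq c ≤ x ∧ x < qseq (c + 1) := by
  rw [col, Nat.findGreatest_eq_iff]
  constructor
  · rintro ⟨-, hc, hmax⟩
    refine ⟨?_, lt_of_not_ge fun h => hmax c.lt_succ_self ((le_qseq _).trans h) h⟩
    rcases eq_or_ne c 0 with rfl | hc0
    · exact x.zero_le
    · exact hc hc0
  · rintro ⟨hc, hx⟩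
    exact ⟨(le_qseq c).trans hc, fun _ => hc, fun m hcm _ => (hx.trans_le (qseq_mono hcm)).not_ge⟩

lemma qseq_col_le (x : ℕ) : qseq (col x) ≤ x := (col_eq_iff.mp rfl).1

lemma col_le (x : ℕ) : col x ≤ x := Nat.findGreatest_le x

lemma rowf_le (x : ℕ) : rowf x ≤ x := Nat.sub_le _ _

lemma col_rowf_eq_iff {x c r : ℕ} : col x = c ∧ rowf x = r ↔ qseq c + r = x ∧ r ≤ c := by
  rw [rowf, qf]
  constructor
  · rintro ⟨rfl, rfl⟩
    have := qseq_succ (col x)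
    have := col_eq_iff.mp (rfl : col x = col x)
    omega
  · rintro ⟨rfl, hr⟩
    have hcol : col (qseq c + r) = c := col_eq_iff.mpr (by rw [qseq_succ]; omega)
    exact ⟨hcol, by rw [hcol]; omega⟩

lemma exists_col_rowf_iff {n x : ℕ} {P : ℕ → ℕ → Prop} (hx : x ≤ n) :
    (∃ c ≤ n, ∃ r ≤ n, (col x = c ∧ rowf x = r) ∧ P c r) ↔ P (col x) (rowf x) := by
  constructor
  · rintro ⟨_, -, _, -, ⟨rfl, rfl⟩, h⟩
    exact h
  · exact fun h => ⟨_, (col_le x).trans hx, _, (rowf_le x).trans hx, ⟨rfl, rfl⟩, h⟩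

lemma col_lt {n x : ℕ} (hn : 2 ≤ n) (hx : x ≤ n) : col x < n := by
  obtain ⟨k, rfl⟩ := Nat.exists_eq_add_of_le' hn
  by_contra! h
  have := (qseq_mono h).trans (qseq_col_le x)
  have := le_qseq (k + 1)
  have : qseq (k + 2) = qseq (k + 1) + (k + 2) := qseq_succ (k + 1)
  omega

namespace BitDefinable

variable {α : Type}

instance qseq_eq (c q : α) : BitDefinable fun _ v => qseq (v c) = v q := by
  refine (inferInstance : BitDefinable fun n v => ∃ d ≤ n, ∃ p ≤ n, v c * d = p ∧
    (d + d = v c ∧ p + d = v q ∨ ∃ e ≤ n, d + d = e ∧ e + 1 = v c ∧ p + v c = v q)).congr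
      fun n v hv => ?_
  have hc := hv c
  have hq := hv q
  rw [qseq_eq_iff]
  constructor
  · rintro ⟨d, -, _, -, rfl, h | ⟨_, -, rfl, h⟩⟩
    · exact ⟨d, .inl h⟩
    · exact ⟨d, .inr h⟩
  · rintro ⟨d, h | h⟩
    · exact ⟨d, by omega, _, by omega, rfl, .inl h⟩
    · exact ⟨d, by omega, _, by omega, rfl, .inr ⟨_, by omega, rfl, h⟩⟩

instance col_rowf (x c r : α) : BitDefinable fun _ v => col (v x) = v c ∧ rowf (v x) = v r := by
  refine (inferInstance : BitDefinable fun n v =>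
    ∃ q ≤ n, qseq (v c) = q ∧ q + v r = v x ∧ v r ≤ v c).congr fun n v hv => ?_
  have hx := hv x
  rw [col_rowf_eq_iff]
  constructor
  · rintro ⟨_, -, rfl, h⟩
    exact h
  · exact fun h => ⟨_, by omega, rfl, h⟩

instance ordc (i j : α) : BitDefinable fun _ v => ordc (v i) (v j) :=
  (inferInstance : BitDefinable fun n v =>
    ∃ c ≤ n, ∃ r ≤ n, (col (v i) = c ∧ rowf (v i) = r) ∧
      ∃ c' ≤ n, ∃ r' ≤ n, (col (v j) = c' ∧ rowf (v j) = r') ∧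
        (r < r' ∨ r = r' ∧ c < c')).congr fun n v hv => by
    rw [exists_col_rowf_iff (hv i), exists_col_rowf_iff (hv j), _root_.ordc]

instance cpred [Finite α] (i : α) : BitDefinable fun _ v => Cpred (v i) := by
  refine (inferInstance : BitDefinable fun n v =>
    ∃ c ≤ n, ∃ r ≤ n, (col (v i) = c ∧ rowf (v i) = r) ∧
      ∃ c' ≤ n, c + 1 = c' ∧ c'.testBit r).of_eventually ?_
  filter_upwards [Filter.eventually_ge_atTop 2] with n hn v hv
  rw [exists_col_rowf_iff (hv i), Cpred]
  constructor
  · rintro ⟨_, -, rfl, h⟩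
    exact h
  · exact fun h => ⟨_, col_lt hn (hv i), rfl, h⟩

instance qpred [Finite α] (i : α) : BitDefinable fun _ v => Qpred (v i) := by
  refine (inferInstance : BitDefinable fun n v =>
    ∃ c ≤ n, ∃ r ≤ n, (col (v i) = c ∧ rowf (v i) = r) ∧
      ∃ q ≤ n, qseq c = q ∧ ∃ c' ≤ n, c + 1 = c' ∧ (q + c').testBit r).of_eventually ?_
  filter_upwards [Filter.eventually_ge_atTop 2] with n hn v hv
  rw [exists_col_rowf_iff (hv i), Qpred, qseq_succ]
  constructor
  · rintro ⟨_, -, rfl, _, -, rfl, h⟩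
    exact h
  · exact fun h => ⟨_, (qseq_col_le _).trans (hv i), rfl, _, col_lt hn (hv i), rfl, h⟩

end BitDefinable

/-- Lemma 3.2: there are FO(Bit)-formulas defining `<`, `◁`, `C`, `Q`
in every finite prefix structure `({0,...,n}, Bit)`. -/
theorem bit_defines_lt_ordc_C_Q :
    ∃ (φlt φordc : LBit.Formula (Fin 2)) (φC φQ : LBit.Formula (Fin 1)),
      ∀ n : ℕ,
        letI := bitStruct n
        ∀ a b : Fin (n + 1),
          (φlt.Realize ![a, b] ↔ (a : ℕ) < (b : ℕ)) ∧
          (φordc.Realize ![a, b] ↔ ordc (a : ℕ) (b : ℕ)) ∧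
          (φC.Realize ![a] ↔ Cpred (a : ℕ)) ∧
          (φQ.Realize ![a] ↔ Qpred (a : ℕ)) := by
  obtain ⟨φlt, hlt⟩ := (BitDefinable.lt (0 : Fin 2) 1).exists_formula
  obtain ⟨φordc, hordc⟩ := (BitDefinable.ordc (0 : Fin 2) 1).exists_formula
  obtain ⟨φC, hC⟩ := (BitDefinable.cpred (0 : Fin 1)).exists_formula
  obtain ⟨φQ, hQ⟩ := (BitDefinable.qpred (0 : Fin 1)).exists_formula
  exact ⟨φlt, φordc, φC, φQ, fun n a b => ⟨hlt n ![a, b], hordc n ![a, b], hC n ![a], hQ n ![a]⟩⟩
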